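/- For the cycle C_n on n ≥ 4 vertices, the Thue reach equals the diameter: π_R(C_n) = diam(C_n) = ⌊n/2⌋. That is, there exists a Thue colouring of C_n using exactly π(C_n) colours in which two vertices at distance ⌊n/2⌋ receive the same colour, and this is the maximum possible distance between equally coloured vertices over all such colourings. -/

import Mathlib

/-!
The paths of a cycle are its arcs, so a Thue colouring of `C_n` is a square-free word written around
a circle of length `n`. Since no distance exceeds `⌊n / 2⌋`, it suffices to find such a word with
equal letters at two opposite positions, over the least possible number of letters.

For `n < 92` such words are listed. For larger `n`, take a shorter ternary one, of even length
`2 * k` such that `q = ⌊n / (2 * k)⌋` satisfies `23 ≤ q ≤ 34`, and substitute for its letters blocks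
of lengths `q` and `q + 1`, distributed so evenly that the middle cut between blocks falls on
`⌊n / 2⌋`. The blocks are chosen so that a bounded number of letters, either just before or just
after a position, decide whether it is a cut. The halves of a square of period more than `q` are
therefore cut in the same way, and the first letters of their blocks form a square in the shorter
word. A square of smaller period lies within three consecutive blocks, where a finite check excludes
it.
-/

open SimpleGraph Function

/-- A Thue colouring of a simple graph `G`: a proper vertex colouring such that the
colour sequence along any path (here: the support of a path-walk) is non-repetitive,
i.e. it is never a square `l ++ l` with `l` nonempty. -/
def IsThueColoring {V α : Type*} (G : SimpleGraph V) (φ : V → α) : Prop :=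
  (∀ ⦃a b : V⦄, G.Adj a b → φ a ≠ φ b) ∧
  ∀ ⦃a b : V⦄ (p : G.Walk a b), p.IsPath →
    ∀ l : List α, l ≠ [] → p.support.map φ ≠ l ++ l

/-- The Thue chromatic number `π(G)`: the least number of colours admitting a Thue
colouring of `G`. -/
noncomputable def thueNumber {V : Type*} (G : SimpleGraph V) : ℕ :=
  sInf {k | ∃ φ : V → Fin k, IsThueColoring G φ}
/-- The Thue reach `π_R(G)`: the maximum, over all Thue colourings `φ` of `G` using
exactly `π(G)` colours and all pairs of distinct equally coloured vertices `u, v`, of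
the distance `d_G(u,v)` (equivalently, the maximum of the positive Thue colour
diameters `π_D(c)`). -/
noncomputable def thueReach {V : Type*} (G : SimpleGraph V) : ℕ :=
  sSup {d | 0 < d ∧ ∃ φ : V → Fin (thueNumber G), Function.Surjective φ ∧
    IsThueColoring G φ ∧ ∃ u v : V, u ≠ v ∧ φ u = φ v ∧ G.dist u v = d}

section Words

variable {α β : Type*}

/-- The factor of length `m` of the infinite word `w` that starts at position `s`. -/
def factor (w : ℕ → α) (s m : ℕ) : List α :=
  (List.range' s m).map w

lemma length_factor (w : ℕ → α) (s m : ℕ) : (factor w s m).length = m := by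
  simp [factor]

lemma factor_succ (w : ℕ → α) (s m : ℕ) : factor w s (m + 1) = w s :: factor w (s + 1) m := rfl

lemma factor_add (w : ℕ → α) (s m m' : ℕ) :
    factor w s (m + m') = factor w s m ++ factor w (s + m) m' := by
  simp [factor, ← List.map_append, List.range'_append_1]

lemma map_factor (f : α → β) (w : ℕ → α) (s m : ℕ) :
    (factor w s m).map f = factor (f ∘ w) s m := by
  simp [factor]

lemma factor_eq_factor_iff {w w' : ℕ → α} {s s' m : ℕ} :
    factor w s m = factor w' s' m ↔ ∀ j < m, w (s + j) = w' (s' + j) := by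
  simp [factor, List.range'_eq_map_range]

lemma factor_mod_period {w : ℕ → α} {n : ℕ} (hw : Periodic w n) (s m : ℕ) :
    factor w (s % n) m = factor w s m :=
  factor_eq_factor_iff.2 fun j _ ↦ by
    rw [← hw.map_mod_nat (s % n + j), Nat.mod_add_mod, hw.map_mod_nat]

lemma factor_add_period {w : ℕ → α} {n : ℕ} (hw : Periodic w n) (s m : ℕ) :
    factor w (s + n) m = factor w s m := by
  rw [← factor_mod_period hw, Nat.add_mod_right, factor_mod_period hw]

/-- `w` is the periodic extension of a word of length `n` which, read around a circle, contains no
square `l ++ l` of length at most `n`. -/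
structure IsCircularSquareFree (w : ℕ → α) (n : ℕ) : Prop where
  periodic : Periodic w n
  factor_ne : ∀ p, 0 < p → 2 * p ≤ n → ∀ s, factor w s p ≠ factor w (s + p) p

lemma IsCircularSquareFree.comp {w : ℕ → α} {n : ℕ} (h : IsCircularSquareFree w n) {f : α → β}
    (hf : Injective f) : IsCircularSquareFree (f ∘ w) n where
  periodic := h.periodic.comp f
  factor_ne p hp hpn s := by
    rw [← map_factor, ← map_factor, (List.map_injective_iff.2 hf).ne_iff]
    exact h.factor_ne p hp hpn s

lemma IsCircularSquareFree.ne_succ {w : ℕ → α} {n : ℕ} (h : IsCircularSquareFree w n)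
    (hn : 2 ≤ n) (i : ℕ) : w i ≠ w (i + 1) := fun heq ↦
  h.factor_ne 1 one_pos hn i (by simpa [factor] using heq)

lemma IsCircularSquareFree.factor_ne_append_self {w : ℕ → α} {n m s : ℕ}
    (h : IsCircularSquareFree w n) (hm : m ≤ n) {l : List α} (hl : l ≠ []) :
    factor w s m ≠ l ++ l := by
  intro heq
  have hlen : m = l.length + l.length := by
    simpa only [length_factor, List.length_append] using congrArg List.length heq
  rw [hlen, factor_add] at heq
  obtain ⟨h₁, h₂⟩ := List.append_inj heq (length_factor _ _ _)
  exact h.factor_ne _ (List.length_pos_iff.2 hl) (by omega) s (h₁.trans h₂.symm)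

end Words

section Codes

variable {k : ℕ}

/-- The number whose base `k` digits are the letters of `l`, the least significant digit first.
Comparing factors of a word thus becomes arithmetic on one number. -/
def code (l : List (Fin k)) : ℕ :=
  Nat.ofDigits k (l.map Fin.val)

lemma code_cons (a : Fin k) (l : List (Fin k)) : code (a :: l) = a + k * code l := by
  simp [code, Nat.ofDigits_cons]

lemma code_append (l l' : List (Fin k)) :
    code (l ++ l') = code l + k ^ l.length * code l' := by
  simp [code, Nat.ofDigits_append]

lemma code_lt (l : List (Fin k)) : code l < k ^ l.length := by
  induction l with
  | nil => simp [code]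
  | cons a l ih =>
    calc code (a :: l) = a + k * code l := code_cons a l
      _ < k * (code l + 1) := by linarith [a.isLt]
      _ ≤ k * k ^ l.length := Nat.mul_le_mul_left k ih
      _ = k ^ (a :: l).length := by rw [List.length_cons, pow_succ']

lemma code_factor_eq_iff {w w' : ℕ → Fin k} {s s' m : ℕ} :
    code (factor w s m) = code (factor w' s' m) ↔ factor w s m = factor w' s' m := by
  refine ⟨fun h ↦ ?_, congrArg code⟩
  obtain hk | hk := le_or_gt k 1
  · have : Subsingleton (Fin k) := Fin.subsingleton_iff_le_one.2 hk
    exact factor_eq_factor_iff.2 fun _ _ ↦ Subsingleton.elim _ _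
  · refine List.map_injective_iff.2 Fin.val_injective
      (Nat.ofDigits_inj_of_len_eq hk ?_ ?_ ?_ h) <;> simp [length_factor]

lemma code_factor_add (w : ℕ → Fin k) (s m m' : ℕ) :
    code (factor w s (m + m')) = code (factor w s m) + k ^ m * code (factor w (s + m) m') := by
  rw [factor_add, code_append, length_factor]

lemma code_factor_lt (w : ℕ → Fin k) (s m : ℕ) : code (factor w s m) < k ^ m := by
  simpa only [length_factor] using code_lt (factor w s m)

lemma code_factor_div (w : ℕ → Fin k) {s i N : ℕ} (h : i ≤ N) :
    code (factor w s N) / k ^ i = code (factor w (s + i) (N - i)) := by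
  obtain ⟨r, rfl⟩ := Nat.exists_eq_add_of_le h
  have hlt := code_factor_lt w s i
  rw [code_factor_add, Nat.add_mul_div_left _ _ (by omega), Nat.div_eq_of_lt hlt, zero_add,
    Nat.add_sub_cancel_left]

lemma code_factor_mod (w : ℕ → Fin k) {s i N : ℕ} (h : i ≤ N) :
    code (factor w s N) % k ^ i = code (factor w s i) := by
  obtain ⟨r, rfl⟩ := Nat.exists_eq_add_of_le h
  rw [code_factor_add, Nat.add_mul_mod_self_left, Nat.mod_eq_of_lt (code_factor_lt w s i)]

lemma code_factor_div_mod (w : ℕ → Fin k) {s i p N : ℕ} (h : i + p ≤ N) :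
    code (factor w s N) / k ^ i % k ^ p = code (factor w (s + i) p) := by
  rw [code_factor_div w (by omega), code_factor_mod w (by omega)]

/-- Whether no prefix of length `2 * p`, `0 < p ≤ P`, of the word with code `T` is a square. -/
def noSquarePrefix (k P T : ℕ) : Bool :=
  (List.range' 1 P).all fun p ↦ T % k ^ p != T / k ^ p % k ^ p

lemma noSquarePrefix_code_factor {w : ℕ → Fin k} {s N P : ℕ} (h : 2 * P ≤ N) :
    noSquarePrefix k P (code (factor w s N)) ↔
      ∀ p, 0 < p → p ≤ P → factor w s p ≠ factor w (s + p) p := by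
  simp only [noSquarePrefix, List.all_eq_true, List.mem_range'_1, bne_iff_ne, and_imp,
    Nat.one_add, Nat.succ_le_iff, Nat.lt_succ_iff]
  refine forall₃_congr fun p _ hp ↦ ?_
  rw [code_factor_mod w (by omega), code_factor_div_mod w (by omega), Ne, code_factor_eq_iff]

/-- Whether in the word with code `T` no square of length `2 * p`, `0 < p ≤ P`, starts at one of the
first `m` positions. -/
def noSquareBefore (k m P T : ℕ) : Bool :=
  (List.range m).all fun i ↦ noSquarePrefix k P (T / k ^ i)

lemma noSquareBefore_code_factor {w : ℕ → Fin k} {s m N P : ℕ} (h : m + 2 * P ≤ N + 1) :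
    noSquareBefore k m P (code (factor w s N)) ↔
      ∀ i < m, ∀ p, 0 < p → p ≤ P → factor w (s + i) p ≠ factor w (s + i + p) p := by
  simp only [noSquareBefore, List.all_eq_true, List.mem_range]
  refine forall₂_congr fun i hi ↦ ?_
  rw [code_factor_div w (by omega), noSquarePrefix_code_factor (by omega)]

/-- Whether the word of length `n` with code `T` is square-free when read around a circle. -/
def circularlySquareFree (k n T : ℕ) : Bool :=
  noSquareBefore k n (n / 2) (T + k ^ n * T)

lemma circularlySquareFree_code_factor {w : ℕ → Fin k} {n : ℕ} (hw : Periodic w n) :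
    circularlySquareFree k n (code (factor w 0 n)) ↔ IsCircularSquareFree w n := by
  have hdouble : code (factor w 0 n) + k ^ n * code (factor w 0 n) = code (factor w 0 (n + n)) := by
    rw [code_factor_add, factor_add_period hw]
  rw [circularlySquareFree, hdouble, noSquareBefore_code_factor (by omega)]
  constructor
  · refine fun h ↦ ⟨hw, fun p hp hpn s ↦ ?_⟩
    have hne := h (s % n) (Nat.mod_lt s (by omega)) p hp (by omega)
    rwa [zero_add, factor_mod_period hw, ← factor_mod_period hw (s % n + p), Nat.mod_add_mod,
      factor_mod_period hw] at hne
  · exact fun h i _ p hp hpn ↦ h.factor_ne p hp (by omega) (0 + i)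

end Codes

section Alphabet

/-- The Thue chromatic number of the cycle of length `n ≥ 4`. -/
def cycleThueNumber (n : ℕ) : ℕ :=
  if n ∈ [5, 7, 9, 10, 14, 17] then 4 else 3

instance (n : ℕ) : NeZero (cycleThueNumber n) :=
  ⟨by unfold cycleThueNumber; split <;> decide⟩

/-- The codes of all square-free words of length `m` over `k` letters. -/
def squareFreeCodes (k : ℕ) : ℕ → List ℕ
  | 0 => [0]
  | m + 1 => (squareFreeCodes k m).flatMap fun T ↦
      ((List.range k).map (· + k * T)).filter (noSquarePrefix k ((m + 1) / 2))

lemma IsCircularSquareFree.code_factor_mem_squareFreeCodes {k n m : ℕ} {w : ℕ → Fin k}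
    (h : IsCircularSquareFree w n) (hm : m ≤ n) (s : ℕ) :
    code (factor w s m) ∈ squareFreeCodes k m := by
  induction m generalizing s with
  | zero => simp [squareFreeCodes, factor, code]
  | succ m ih =>
    have hprefix : noSquarePrefix k ((m + 1) / 2) (code (factor w s (m + 1))) :=
      (noSquarePrefix_code_factor (by omega)).2 fun p hp _ ↦ h.factor_ne p hp (by omega) s
    simp only [squareFreeCodes, List.mem_flatMap, List.mem_filter, List.mem_map, List.mem_range]
    exact ⟨_, ih (by omega) (s + 1), ⟨w s, (w s).isLt, (code_cons _ _).symm⟩, hprefix⟩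

lemma not_isCircularSquareFree_two {n : ℕ} (hn : 4 ≤ n) (w : ℕ → Fin 2) :
    ¬ IsCircularSquareFree w n := by
  intro h
  have h₀ : w 0 ≠ w 1 := h.ne_succ (by omega) 0
  have h₁ : w 1 ≠ w 2 := h.ne_succ (by omega) 1
  have h₂ : w 2 ≠ w 3 := h.ne_succ (by omega) 2
  refine h.factor_ne 2 two_pos hn 0 (factor_eq_factor_iff.2 fun j hj ↦ ?_)
  interval_cases j
  · change w 0 = w 2
    omega
  · change w 1 = w 3
    omega

lemma not_circularlySquareFree_three :
    ∀ n ∈ [5, 7, 9, 10, 14, 17], ∀ T ∈ squareFreeCodes 3 n, ¬ circularlySquareFree 3 n T := by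
  decide +kernel

lemma not_isCircularSquareFree_three {n : ℕ} (hn : n ∈ [5, 7, 9, 10, 14, 17]) (w : ℕ → Fin 3) :
    ¬ IsCircularSquareFree w n := fun h ↦
  not_circularlySquareFree_three n hn _ (h.code_factor_mem_squareFreeCodes le_rfl 0)
    ((circularlySquareFree_code_factor h.periodic).2 h)

lemma IsCircularSquareFree.cycleThueNumber_le {n m : ℕ} {w : ℕ → Fin m}
    (h : IsCircularSquareFree w n) (hn : 4 ≤ n) : cycleThueNumber n ≤ m := by
  by_contra! hlt
  unfold cycleThueNumber at hlt
  split at hlt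
  next hexc =>
    exact not_isCircularSquareFree_three hexc _
      (h.comp (Fin.castLE_injective (Nat.le_of_lt_succ hlt)))
  next =>
    exact not_isCircularSquareFree_two hn _
      (h.comp (Fin.castLE_injective (Nat.le_of_lt_succ hlt)))

/-- There is a circular square-free word of length `n` over `k` letters with equal letters at the
opposite positions `0` and `n / 2`. -/
def HasAntipodalWord (k n : ℕ) : Prop :=
  ∃ w : ℕ → Fin k, IsCircularSquareFree w n ∧ w 0 = w (n / 2)

/-- The periodic word whose first `n` letters are the decimal digits of `X`, reduced modulo `k`
and read from the least significant one. -/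
def decimalWord (k n X : ℕ) [NeZero k] (i : ℕ) : Fin k :=
  Fin.ofNat k (X / 10 ^ (i % n) % 10)

lemma decimalWord_periodic (k n X : ℕ) [NeZero k] : Periodic (decimalWord k n X) n := fun i ↦ by
  rw [decimalWord, decimalWord, Nat.add_mod_right]

/-- Decimal representations of circular square-free words of lengths `4, 5, …, 91` with equal
letters at two opposite positions. -/
def shortWords : List ℕ := [
  1202,
  12030,
  120210,
  1202302,
  12102120,
  120102030,
  1201030210,
  12010201202,
  120102012102,
  1201020120210,
  12010203120210,
  120210121020102,
  1201021202101202,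
  12013123212021232,
  120102012021012102,
  1201020120210201210,
  12010210120102012102,
  120121020120210120102,
  1201020120212012101202,
  12010201210201021012102,
  120102012102120210201202,
  1201021012102010212012102,
  12010201202101210212010210,
  120102101201021202102012102,
  1201020121012021012102120210,
  12012102120210201021202101202,
  120102012021012102012021020102,
  1201020121020102120102012101202,
  12010201210201021012010212012102,
  120102120210121020121012010201202,
  1201021012010201202101201021012102,
  12010201202101201020121012021201210,
  120210201210120210201021012021201020,
  1201020120210120102101210212012101202,
  12010201210201021201020121012021201210,
  120102012021201021202102010212010201210,
  1201020120210201210212021012102012101202,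
  12010201210120210201021202101201021201210,
  120102012101202101210201021201210212010210,
  1201020120210201021012021201210120210201202,
  12010201202102012102120121020120212012101202,
  120102012021020121021202101201020120212010210,
  1201020121012010210121020121012021201020120210,
  12010201202101201021201210120212010210121020102,
  120102012102010212021012102012101202101210201202,
  1201020120210121020121012021012102010212021012102,
  12010201202101201021012021020102120210120102101202,
  120102012021201210201021202101201021012021020120210,
  1201021202101202120102012021201210120102101210201210,
  12010201202102010210120212012102120210120212010201210,
  120102012021012010212012102012021201210120210121020102,
  1201020120210121020102101210212021012010212021020120210,
  12010210121021201020120210120102120210201210120210201202,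
  120102012101201020120210201021201210120210201021202101202,
  1201020121012021201020120212012101202120102101202102010210,
  12010201202120102101201020120212010201210120102120121020102,
  120102012021012102120210120212010201202102010210120102012102,
  1201020121020102120102012102120121020120212010210121020120210,
  12012101201021012102120210121020102101201020121021201210201202,
  120102012021201210120210121020102101210212012101202120102120210,
  1201020120212010210121020102120210201210120102101210212021020102,
  12010201202101201021201210201021012102012101202120121020102120210,
  120102012021201021202101210212010210120212012101202102012021201210,
  1201020120210120102101210201202102012101201020120212010212021020102,
  12010201202120102012102120121020102101202102012021201021012102120210,
  120102012021012010212012102012021201210212021012102012101202102010210,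
  1201020120210201210120102012021201210120210201021202101210201021012102,
  12010201210212021020102120102012021012010212021020102101210201021201210,
  120102012101201021012102010212021020120212012102010212010201202102010210,
  1201020121012010210120210201202101210212012102010212010201202120102120210,
  12010201202101210201202120102120210120212012102120102101202102012021012102,
  120102012102010210120102120210201021201210212021012102120121012021020120210,
  1201020121020102120121021201021012102012101202102012102120121012021020120210,
  12010201210120210201021202101210201021201210212010201210201021012010212012102,
  120102012101201021202101201021012021020102120102012102120121012021012102120210,
  1201020120210120102012102010210121021202102010210120102012021201210120210201202,
  12010201202101210201021201210120102012021201020121021202101201020121012021012102,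
  120102012021020102120210121020121012010201202120102120210201021201020121021201210,
  1201020120212010201210120102101202102012021201020121012021012102010210121021201210,
  12010201202101201020121012010212021012021201210212010201202120102101210212021020102,
  120102012021201020121012021201021012021020120210120102120121020102120102012102120210,
  1201020120210121021202101201021202101210212010201202102012101201021012102012021020102,
  12010201210120210201210212010210120210201202101201021201210212021012102120121020120210,
  120102012021201020121021201210120102101210201202102012102120210120102012101201021201210,
  1201020120210120102012021201021012021201210201021202101202120102012102120210201021012102,
  12010201202102012102120102101202102010212021020121021201210120102012102120102101210201210,
  120102012021012102120210120212012101202101210212010210120102120210201021012021020102120210,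
  1201020120210201021202102012021012010212021012021201020120212012101201021201210120212012102
]

/-- The periodic extension of the word of length `n` in `shortWords`. -/
def shortWord (n : ℕ) : ℕ → Fin (cycleThueNumber n) :=
  decimalWord _ n (shortWords.getD (n - 4) 0)

lemma shortWord_check : ∀ n ∈ List.range' 4 88,
    circularlySquareFree (cycleThueNumber n) n (code (factor (shortWord n) 0 n)) ∧
      shortWord n 0 = shortWord n (n / 2) := by
  decide +kernel

lemma hasAntipodalWord_of_lt_92 {n : ℕ} (hn : 4 ≤ n) (hn' : n < 92) :
    HasAntipodalWord (cycleThueNumber n) n := by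
  obtain ⟨hfree, hopp⟩ := shortWord_check n (List.mem_range'_1.2 ⟨hn, hn'⟩)
  exact ⟨shortWord n, (circularlySquareFree_code_factor (decimalWord_periodic _ _ _)).1 hfree, hopp⟩

end Alphabet

section Recognizability

open scoped Classical in
/-- The number of values of `b` below `s`. -/
noncomputable def cutCount (b : ℕ → ℕ) (s : ℕ) : ℕ :=
  Nat.count (· ∈ Set.range b) s

variable {b : ℕ → ℕ}

lemma cutCount_apply (hb : StrictMono b) (t : ℕ) : cutCount b (b t) = t := by
  classical
  have hfilter : {i ∈ Finset.range (b t) | i ∈ Set.range b} = (Finset.range t).image b := by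
    ext i
    simp only [Finset.mem_filter, Finset.mem_range, Set.mem_range, Finset.mem_image]
    exact ⟨fun ⟨hi, r, hr⟩ ↦ ⟨r, hb.lt_iff_lt.1 (hr ▸ hi), hr⟩,
      fun ⟨r, hr, hi⟩ ↦ ⟨hi ▸ hb hr, r, hi⟩⟩
  rw [cutCount, Nat.count_eq_card_filter_range]
  convert congrArg Finset.card hfilter
  rw [Finset.card_image_of_injective _ hb.injective, Finset.card_range]

lemma cutCount_le_iff (hb : StrictMono b) {s t : ℕ} : cutCount b s ≤ t ↔ s ≤ b t := by
  classical
  refine ⟨fun h ↦ ?_, fun h ↦ ?_⟩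
  · by_contra! hlt
    exact (Nat.count_strict_mono (p := (· ∈ Set.range b)) ⟨t, rfl⟩ hlt).not_ge
      (h.trans_eq (cutCount_apply hb t).symm)
  · exact (Nat.count_monotone _ h).trans_eq (cutCount_apply hb t)

lemma lt_cutCount_iff (hb : StrictMono b) {s t : ℕ} : t < cutCount b s ↔ b t < s := by
  rw [← not_le, cutCount_le_iff hb, not_le]

lemma cutCount_add_of_mem_iff {s p : ℕ}
    (h : ∀ i < p, s + i ∈ Set.range b ↔ s + p + i ∈ Set.range b) {i : ℕ} (hi : i ≤ p) :
    cutCount b (s + p + i) + cutCount b s = cutCount b (s + p) + cutCount b (s + i) := by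
  classical
  induction i with
  | zero => rfl
  | succ i ih =>
    have ih := ih (by omega)
    simp only [cutCount, ← add_assoc, Nat.count_succ, h i hi] at ih ⊢
    omega

lemma exists_apply_add_eq_of_mem_iff (hb : StrictMono b) {s p : ℕ}
    (h : ∀ i < p, s + i ∈ Set.range b ↔ s + p + i ∈ Set.range b) :
    ∃ a m, (∀ t, s ≤ b t ∧ b t < s + p ↔ a ≤ t ∧ t < a + m) ∧
      ∀ j < m, b (a + m + j) = b (a + j) + p := by
  have hle : cutCount b s ≤ cutCount b (s + p) := by
    classical exact Nat.count_monotone _ (by omega)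
  have hrange (t : ℕ) : s ≤ b t ∧ b t < s + p ↔
      cutCount b s ≤ t ∧ t < cutCount b s + (cutCount b (s + p) - cutCount b s) := by
    rw [← cutCount_le_iff hb, ← lt_cutCount_iff hb, Nat.add_sub_cancel' hle]
  refine ⟨cutCount b s, cutCount b (s + p) - cutCount b s, hrange, fun j hj ↦ ?_⟩
  obtain ⟨hs, hp⟩ := (hrange (cutCount b s + j)).2 ⟨by omega, by omega⟩
  obtain ⟨i, hi⟩ := Nat.exists_eq_add_of_le hs
  obtain ⟨r, hr⟩ := (h i (by omega)).1 ⟨_, hi⟩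
  have hcount := cutCount_add_of_mem_iff h (i := i) (by omega)
  rw [← hr, ← hi, cutCount_apply hb, cutCount_apply hb] at hcount
  rw [show cutCount b s + (cutCount b (s + p) - cutCount b s) + j = r by omega, hr, hi]
  omega

variable {α : Type*} {w : ℕ → α} {S : Set ℕ} {L R : ℕ}

/-- Membership of a position of `w` in `S` is decided by the `L` letters before the position, and
also by the `R` letters from the position on. -/
structure IsRecognizable (w : ℕ → α) (S : Set ℕ) (L R : ℕ) : Prop where
  left : ∀ i j, factor w i L = factor w j L → i + L ∈ S → j + L ∈ S
  right : ∀ i j, factor w i R = factor w j R → i ∈ S → j ∈ S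

-- Each position in a half of a square has `L` letters of that half before it or `R` from it on.
lemma IsRecognizable.mem_iff_of_square (h : IsRecognizable w S L R) {s p i : ℕ}
    (hLR : L + R ≤ p + 1) (hsq : factor w s p = factor w (s + p) p) (hi : i < p) :
    s + i ∈ S ↔ s + p + i ∈ S := by
  have hfactor {d m : ℕ} (hdm : d + m ≤ p) : factor w (s + d) m = factor w (s + p + d) m :=
    factor_eq_factor_iff.2 fun j hj ↦ by
      simpa only [add_assoc] using factor_eq_factor_iff.1 hsq (d + j) (by omega)
  obtain hR | hL := le_or_gt (i + R) p
  · exact ⟨h.right _ _ (hfactor hR), h.right _ _ (hfactor hR).symm⟩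
  · have heq : factor w (s + (i - L)) L = factor w (s + p + (i - L)) L := hfactor (by omega)
    have hcancel (r : ℕ) : r + (i - L) + L = r + i := by omega
    simpa only [hcancel] using Iff.intro (h.left _ _ heq) (h.left _ _ heq.symm)

lemma IsRecognizable.factor_ne (h : IsRecognizable w (Set.range b) L R) (hb : StrictMono b)
    {n k : ℕ} (hperiod : ∀ t, b (t + k) = b t + n) (hcut : IsCircularSquareFree (w ∘ b) k)
    {s p : ℕ} (hLR : L + R ≤ p + 1) (hpn : 2 * p ≤ n) (hs : ∃ t, s ≤ b t ∧ b t < s + p) :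
    factor w s p ≠ factor w (s + p) p := by
  intro hsq
  obtain ⟨a, m, hrange, hrepeat⟩ := exists_apply_add_eq_of_mem_iff hb fun i hi ↦
    h.mem_iff_of_square hLR hsq hi
  have hm : 0 < m := by
    obtain ⟨t, ht⟩ := hs
    have := (hrange t).1 ht
    omega
  have hmk : 2 * m ≤ k := by
    have hfirst := (hrange a).2 (by omega)
    have hlast := (hrange (a + (m - 1))).2 (by omega)
    have hlt : b (a + m + (m - 1)) < b (a + k) := by
      rw [hperiod, hrepeat _ (by omega)]
      omega
    have := hb.lt_iff_lt.1 hlt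
    omega
  refine hcut.factor_ne m hm hmk a (factor_eq_factor_iff.2 fun j hj ↦ ?_)
  obtain ⟨hsj, hjp⟩ := (hrange (a + j)).2 (by omega)
  have heq := factor_eq_factor_iff.1 hsq (b (a + j) - s) (by omega)
  rw [comp_apply, comp_apply, hrepeat j hj]
  convert heq using 2 <;> omega

end Recognizability

section Blocks

/-- For `23 ≤ q ≤ 34`, decimal representations of two ternary words of lengths `q` and `q + 1`. They
were found by a computer search for `block_noSquare`, `block_right` and `block_left`. -/
def blockNumerals : ℕ → ℕ × ℕ
  | 23 => (01210201021012021201210,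
    012102010210121021201210)
  | 24 => (012021201210120102120210,
    0120212010210120102120210)
  | 25 => (0121021201021012021201210,
    01210212021020121021201210)
  | 26 => (01210212021020121021201210,
    012102010212021012021201210)
  | 27 => (012102010212021012021201210,
    0121020102120210121021201210)
  | 28 => (0121020102120210121021201210,
    01210201021201020121021201210)
  | 29 => (01210201021201020121021201210,
    012102010210120210201021201210)
  | 30 => (012021201210120102012102120210,
    0120210201210120102012102120210)
  | 31 => (0120212012101202102012102120210,
    01202120121012010212012102120210)
  | 32 => (01202120121012010212012102120210,
    012021020121021201210120102120210)
  | 33 => (012021201210212010210120102120210,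
    0120210201210212010210120102120210)
  | 34 => (0121020102101210212021012021201210,
    01210201021012102120210201021201210)
  | _ => (0, 0)

/-- The word of length `l ∈ {q, q + 1}` that is substituted for the letter `a`. -/
def block (q l : ℕ) (a : Fin 3) : List (Fin 3) :=
  (factor (decimalWord 3 l (if l = q then (blockNumerals q).1 else (blockNumerals q).2)) 0 l).map
    (a + ·)

lemma length_block (q l : ℕ) (a : Fin 3) : (block q l a).length = l := by
  rw [block, List.length_map, length_factor]

lemma map_add_block (q l : ℕ) (c a : Fin 3) : (block q l a).map (c + ·) = block q l (c + a) := by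
  simp only [block, List.map_map, comp_def, add_assoc]

lemma head_block : ∀ q ∈ List.range' 23 12, ∀ l ∈ [q, q + 1], ∀ a,
    (block q l a).head? = some a := by
  decide +kernel

lemma block_noSquare : ∀ q ∈ List.range' 23 12, ∀ l₁ ∈ [q, q + 1], ∀ l₂ ∈ [q, q + 1],
    ∀ l₃ ∈ [q, q + 1], ∀ a₂ a₃ : Fin 3, a₂ ≠ 0 → a₃ ≠ a₂ →
      noSquareBefore 3 l₁ q (code (block q l₁ 0 ++ (block q l₂ a₂ ++ block q l₃ a₃))) := by
  decide +kernel

lemma block_right : ∀ q ∈ List.range' 23 12, ∀ l₁ ∈ [q, q + 1], ∀ l₂ ∈ [q, q + 1],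
    ∀ l₃ ∈ [q, q + 1], ∀ a₂ a₃ : Fin 3, a₂ ≠ 0 → ∀ d ∈ List.range' 1 (l₁ - 1),
      code (block q l₁ 0 ++ block q l₂ a₂) / 3 ^ d % 3 ^ 7 ≠ code (block q l₃ a₃) % 3 ^ 7 := by
  decide +kernel

lemma block_left : ∀ q ∈ List.range' 23 12, ∀ l₁ ∈ [q, q + 1], ∀ l₂ ∈ [q, q + 1],
    ∀ l₃ ∈ [q, q + 1], ∀ a₂ a₃ : Fin 3, a₂ ≠ 0 → ∀ d ∈ List.range' 1 (l₂ - 1),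
      code (block q l₁ 0 ++ block q l₂ a₂) / 3 ^ (l₁ + d - (q - 5)) % 3 ^ (q - 5) ≠
        code (block q l₃ a₃) / 3 ^ (l₃ - (q - 5)) := by
  decide +kernel

end Blocks

section BlockWords

variable {q : ℕ} {b : ℕ → ℕ} {w : ℕ → Fin 3}

/-- The infinite word `w` is a concatenation of blocks of lengths `q` and `q + 1`, cut at the
positions `b 0 = 0 < b 1 < ⋯`; the block at a cut is determined by its length and first letter. -/
structure IsBlockWord (q : ℕ) (b : ℕ → ℕ) (w : ℕ → Fin 3) : Prop where
  zero : b 0 = 0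
  exists_block : ∀ t, ∃ l ∈ [q, q + 1],
    b (t + 1) = b t + l ∧ factor w (b t) l = block q l (w (b t))

lemma exists_apply_le_lt_apply_succ (hb : StrictMono b) (h₀ : b 0 = 0) (i : ℕ) :
    ∃ t, b t ≤ i ∧ i < b (t + 1) := by
  have hpos : 0 < cutCount b (i + 1) := (lt_cutCount_iff hb).2 (by omega)
  refine ⟨cutCount b (i + 1) - 1, Nat.lt_succ_iff.1 ?_, Nat.succ_le_iff.1 ?_⟩
  · exact (lt_cutCount_iff hb).1 (Nat.sub_one_lt_of_lt hpos)
  · exact (cutCount_le_iff hb).1 (Nat.sub_add_cancel hpos).ge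

lemma exists_word_factor_eq {α : Type*} (hb : StrictMono b) (h₀ : b 0 = 0) (B : ℕ → List α)
    (hB : ∀ t, b (t + 1) = b t + (B t).length) :
    ∃ w : ℕ → α, ∀ t, factor w (b t) (B t).length = B t := by
  choose r hle hlt using exists_apply_le_lt_apply_succ hb h₀
  have hindex (i : ℕ) : i - b (r i) < (B (r i)).length := by
    have := hle i
    have := hlt i
    have := hB (r i)
    omega
  refine ⟨fun i ↦ (B (r i))[i - b (r i)]'(hindex i), fun t ↦
    List.ext_getElem (length_factor _ _ _) fun j hj _ ↦ ?_⟩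
  have hrt : r (b t + j) = t := by
    rw [length_factor] at hj
    have h₁ := hb.lt_iff_lt.1 ((hle (b t + j)).trans_lt (by rw [hB]; omega : _ < b (t + 1)))
    have h₂ := hb.lt_iff_lt.1 ((Nat.le_add_right _ j).trans_lt (hlt (b t + j)))
    omega
  simp [factor, hrt]

lemma exists_isBlockWord (hq : q ∈ List.range' 23 12) (h₀ : b 0 = 0)
    (hb : ∀ t, ∃ l ∈ [q, q + 1], b (t + 1) = b t + l) (u : ℕ → Fin 3) :
    ∃ w, IsBlockWord q b w ∧ w ∘ b = u := by
  have hq₀ : 0 < q := by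
    rw [List.mem_range'_1] at hq
    omega
  choose l hl hbl using hb
  have hmono : StrictMono b := strictMono_nat_of_lt_succ fun t ↦ by
    have := hl t
    have := hbl t
    grind
  obtain ⟨w, hw⟩ := exists_word_factor_eq hmono h₀ (fun t ↦ block q (l t) (u t)) fun t ↦ by
    rw [length_block, hbl]
  simp only [length_block] at hw
  have hcut (t : ℕ) : w (b t) = u t := by
    have hhead := head_block q hq (l t) (hl t) (u t)
    obtain ⟨m, hm⟩ : ∃ m, l t = m + 1 := Nat.exists_eq_succ_of_ne_zero (by grind)
    rw [← hw t, hm, factor_succ, List.head?_cons] at hhead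
    exact Option.some.inj hhead
  refine ⟨w, ⟨h₀, fun t ↦ ⟨l t, hl t, hbl t, ?_⟩⟩, funext hcut⟩
  rw [hw, hcut]

namespace IsBlockWord

lemma strictMono (h : IsBlockWord q b w) (hq : 0 < q) : StrictMono b :=
  strictMono_nat_of_lt_succ fun t ↦ by
    obtain ⟨l, hl, hbl, -⟩ := h.exists_block t
    grind

lemma const_add (h : IsBlockWord q b w) (c : Fin 3) : IsBlockWord q b fun i ↦ c + w i where
  zero := h.zero
  exists_block t := by
    obtain ⟨l, hl, hbl, hblock⟩ := h.exists_block t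
    refine ⟨l, hl, hbl, ?_⟩
    rw [← map_add_block, ← hblock, map_factor]
    rfl

lemma exists_apply_eq_zero (h : IsBlockWord q b w) (hne : ∀ t, w (b t) ≠ w (b (t + 1))) (t : ℕ) :
    ∃ w', IsBlockWord q b w' ∧ (∀ r, w' (b r) ≠ w' (b (r + 1))) ∧ w' (b t) = 0 ∧
      ∀ s s' m, factor w' s m = factor w' s' m ↔ factor w s m = factor w s' m :=
  ⟨_, h.const_add (-w (b t)), fun r ↦ (add_right_injective _).ne (hne r), neg_add_cancel _,
    fun _ _ _ ↦ by simp only [factor_eq_factor_iff, add_right_inj]⟩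

lemma factor_add_eq (h : IsBlockWord q b w) (t : ℕ) :
    ∃ l₁ ∈ [q, q + 1], ∃ l₂ ∈ [q, q + 1], b (t + 1) = b t + l₁ ∧ b (t + 2) = b (t + 1) + l₂ ∧
      factor w (b t) (l₁ + l₂) = block q l₁ (w (b t)) ++ block q l₂ (w (b (t + 1))) := by
  obtain ⟨l₁, hl₁, hb₁, hblock₁⟩ := h.exists_block t
  obtain ⟨l₂, hl₂, hb₂, hblock₂⟩ := h.exists_block (t + 1)
  refine ⟨l₁, hl₁, l₂, hl₂, hb₁, hb₂, ?_⟩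
  rw [factor_add, hblock₁, ← hb₁, hblock₂]

lemma periodic (h : IsBlockWord q b w) (hq : 0 < q) {n k : ℕ} (hb : ∀ t, b (t + k) = b t + n)
    (hcut : Periodic (w ∘ b) k) : Periodic w n := fun i ↦ by
  obtain ⟨t, hle, hlt⟩ := exists_apply_le_lt_apply_succ (h.strictMono hq) h.zero i
  obtain ⟨l, hl, hbl, hblock⟩ := h.exists_block t
  obtain ⟨l', -, hbl', hblock'⟩ := h.exists_block (t + k)
  obtain rfl : l' = l := by
    rw [add_right_comm, hb, hb] at hbl'
    omega
  have heq : factor w (b t + n) l' = factor w (b t) l' := by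
    rw [hblock, ← hb, hblock']
    exact congrArg _ (hcut t)
  convert factor_eq_factor_iff.1 heq (i - b t) (by omega) using 2 <;> omega

lemma factor_ne_of_le (h : IsBlockWord q b w) (hq : q ∈ List.range' 23 12)
    (hne : ∀ t, w (b t) ≠ w (b (t + 1))) {p : ℕ} (hp : 0 < p) (hpq : p ≤ q) (s : ℕ) :
    factor w s p ≠ factor w (s + p) p := by
  have hq₀ : 0 < q := hp.trans_le hpq
  obtain ⟨t, hle, hlt⟩ := exists_apply_le_lt_apply_succ (h.strictMono hq₀) h.zero s
  wlog hzero : w (b t) = 0 generalizing w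
  · obtain ⟨w', h', hne', hzero', hiff⟩ := h.exists_apply_eq_zero hne t
    exact mt (hiff _ _ _).2 (this h' hne' hzero')
  obtain ⟨l₁, hl₁, l₂, hl₂, hb₁, hb₂, hblock⟩ := h.factor_add_eq t
  obtain ⟨l₃, hl₃, -, hblock₃⟩ := h.exists_block (t + 2)
  have hcode := block_noSquare q hq l₁ hl₁ l₂ hl₂ l₃ hl₃ (w (b (t + 1))) (w (b (t + 2)))
    (hzero ▸ (hne t).symm) (hne (t + 1)).symm
  rw [← List.append_assoc, ← hzero, ← hblock, ← hblock₃, hb₂, hb₁, add_assoc, ← factor_add,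
    noSquareBefore_code_factor (by grind)] at hcode
  simpa only [Nat.add_sub_cancel' hle] using hcode (s - b t) (by omega) p hp hpq

lemma factor_ne_of_right (h : IsBlockWord q b w) (hq : q ∈ List.range' 23 12)
    (hne : ∀ t, w (b t) ≠ w (b (t + 1))) {t j : ℕ} (hj : b t < j) (hj' : j < b (t + 1)) (r : ℕ) :
    factor w j 7 ≠ factor w (b r) 7 := by
  wlog hzero : w (b t) = 0 generalizing w
  · obtain ⟨w', h', hne', hzero', hiff⟩ := h.exists_apply_eq_zero hne t
    exact mt (hiff _ _ _).2 (this h' hne' hzero')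
  have hq' := List.mem_range'_1.1 hq
  obtain ⟨l₁, hl₁, l₂, hl₂, hb₁, -, hblock⟩ := h.factor_add_eq t
  obtain ⟨l₃, hl₃, -, hblock₃⟩ := h.exists_block r
  have hcode := block_right q hq l₁ hl₁ l₂ hl₂ l₃ hl₃ (w (b (t + 1))) (w (b r))
    (hzero ▸ (hne t).symm) (j - b t) (List.mem_range'_1.2 (by omega))
  rw [← hzero, ← hblock, ← hblock₃, code_factor_div_mod _ (by grind), code_factor_mod _ (by grind),
    Nat.add_sub_cancel' hj.le] at hcode
  exact fun heq ↦ hcode (congrArg code heq)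

lemma factor_ne_of_left (h : IsBlockWord q b w) (hq : q ∈ List.range' 23 12)
    (hne : ∀ t, w (b t) ≠ w (b (t + 1))) {t i j : ℕ} (hj : b (t + 1) < j + (q - 5))
    (hj' : j + (q - 5) < b (t + 2)) {r : ℕ} (hi : i + (q - 5) = b (r + 1)) :
    factor w j (q - 5) ≠ factor w i (q - 5) := by
  wlog hzero : w (b t) = 0 generalizing w
  · obtain ⟨w', h', hne', hzero', hiff⟩ := h.exists_apply_eq_zero hne t
    exact mt (hiff _ _ _).2 (this h' hne' hzero')
  have hq' := List.mem_range'_1.1 hq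
  obtain ⟨l₁, hl₁, l₂, hl₂, hb₁, hb₂, hblock⟩ := h.factor_add_eq t
  obtain ⟨l₃, hl₃, hb₃, hblock₃⟩ := h.exists_block r
  have hcode := block_left q hq l₁ hl₁ l₂ hl₂ l₃ hl₃ (w (b (t + 1))) (w (b r))
    (hzero ▸ (hne t).symm) (j + (q - 5) - b (t + 1)) (List.mem_range'_1.2 (by omega))
  have hl₁q : q ≤ l₁ := by grind
  have hl₃q : q ≤ l₃ := by grind
  rw [← hzero, ← hblock, ← hblock₃, code_factor_div_mod _ (by omega), code_factor_div _ (by omega),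
    show b t + (l₁ + (j + (q - 5) - b (t + 1)) - (q - 5)) = j by omega,
    show b r + (l₃ - (q - 5)) = i by omega,
    show l₃ - (l₃ - (q - 5)) = q - 5 by omega] at hcode
  exact fun heq ↦ hcode (congrArg code heq)

lemma isRecognizable (h : IsBlockWord q b w) (hq : q ∈ List.range' 23 12)
    (hne : ∀ t, w (b t) ≠ w (b (t + 1))) {n k : ℕ} (hk : 0 < k)
    (hb : ∀ t, b (t + k) = b t + n) (hw : Periodic w n) :
    IsRecognizable w (Set.range b) (q - 5) 7 := by
  have hq' := List.mem_range'_1.1 hq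
  have hbetween {j : ℕ} (hj : j ∉ Set.range b) : ∃ t, b t < j ∧ j < b (t + 1) := by
    obtain ⟨t, hle, hlt⟩ := exists_apply_le_lt_apply_succ (h.strictMono (by omega)) h.zero j
    exact ⟨t, hle.lt_of_ne fun heq ↦ hj ⟨t, heq⟩, hlt⟩
  constructor
  · rintro i j heq ⟨r, hr⟩
    by_contra hj
    obtain ⟨t, hlt, hlt'⟩ := hbetween hj
    obtain ⟨r, rfl⟩ : ∃ r', r = r' + 1 := Nat.exists_eq_succ_of_ne_zero (by grind [h.zero])
    obtain ⟨k, rfl⟩ : ∃ k', k = k' + 1 := Nat.exists_eq_succ_of_ne_zero (by omega)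
    have hper : b (t + k + 1) = b t + n := hb t
    have hper' : b (t + k + 2) = b (t + 1) + n := by
      rw [← hb, add_right_comm t 1]
      rfl
    refine h.factor_ne_of_left hq hne (t := t + k) (j := j + n) (by omega) (by omega) hr.symm ?_
    rw [factor_add_period hw, heq]
  · rintro i j heq ⟨r, rfl⟩
    by_contra hj
    obtain ⟨t, hlt, hlt'⟩ := hbetween hj
    exact h.factor_ne_of_right hq hne hlt hlt' r heq.symm

lemma isCircularSquareFree (h : IsBlockWord q b w) (hq : q ∈ List.range' 23 12) {n k : ℕ}
    (hk : 2 ≤ k) (hb : ∀ t, b (t + k) = b t + n) (hcut : IsCircularSquareFree (w ∘ b) k) :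
    IsCircularSquareFree w n := by
  have hq' := List.mem_range'_1.1 hq
  have hne := hcut.ne_succ hk
  have hmono := h.strictMono (by omega)
  have hw := h.periodic (by omega) hb hcut.periodic
  refine ⟨hw, fun p hp hpn s ↦ ?_⟩
  obtain hpq | hqp := le_or_gt p q
  · exact h.factor_ne_of_le hq hne hp hpq s
  · refine (h.isRecognizable hq hne (by omega) hb hw).factor_ne hmono hb hcut (by omega) hpn ?_
    obtain ⟨t, hle, hlt⟩ := exists_apply_le_lt_apply_succ hmono h.zero s
    obtain ⟨l, hl, hbl, -⟩ := h.exists_block t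
    obtain rfl | hlt' := hle.eq_or_lt
    · exact ⟨t, by omega⟩
    · exact ⟨t + 1, hlt.le, by grind⟩

end IsBlockWord

end BlockWords

section EvenCuts

variable {n k : ℕ}

/-- The `t`-th cut position when a circle of length `n` is divided as evenly as possible into `k`
blocks. -/
def evenCut (n k t : ℕ) : ℕ :=
  t * n / k

lemma evenCut_add_period (hk : 0 < k) (t : ℕ) : evenCut n k (t + k) = evenCut n k t + n := by
  rw [evenCut, add_mul, Nat.add_mul_div_left _ _ hk, evenCut]

lemma exists_evenCut_succ_eq (hk : 0 < k) (t : ℕ) :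
    ∃ l ∈ [n / k, n / k + 1], evenCut n k (t + 1) = evenCut n k t + l := by
  have hdiv := Nat.add_div (a := t * n) (b := n) hk
  rw [evenCut, evenCut, add_one_mul, hdiv, add_assoc]
  split_ifs <;> simp

-- The cut number `k` lies exactly at `n / 2`, so opposite letters of the short word stay opposite.
lemma HasAntipodalWord.of_div_mem (hk : 0 < k) (h : HasAntipodalWord 3 (2 * k))
    (hn : n / (2 * k) ∈ List.range' 23 12) : HasAntipodalWord 3 n := by
  obtain ⟨u, hu, hopp⟩ := h
  have hcut₀ : evenCut n (2 * k) 0 = 0 := by simp [evenCut]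
  have hcut : evenCut n (2 * k) k = n / 2 := by
    rw [evenCut, mul_comm 2 k, Nat.mul_div_mul_left _ _ hk]
  obtain ⟨w, hw, rfl⟩ := exists_isBlockWord hn hcut₀ (exists_evenCut_succ_eq (by omega)) u
  refine ⟨w, hw.isCircularSquareFree hn (by omega) (evenCut_add_period (by omega)) hu, ?_⟩
  rw [Nat.mul_div_cancel_left k two_pos] at hopp
  simpa only [comp_apply, hcut₀, hcut] using hopp

lemma exists_half_blockCount (hn : 92 ≤ n) :
    ∃ k, 2 ≤ k ∧ 2 * k < n ∧ cycleThueNumber (2 * k) = 3 ∧ n / (2 * k) ∈ List.range' 23 12 := by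
  have hdiv {k : ℕ} (h : 46 * k ≤ n) (h' : n < 70 * k) : n / (2 * k) ∈ List.range' 23 12 := by
    rw [List.mem_range'_1, Nat.le_div_iff_mul_le (by omega), Nat.div_lt_iff_lt_mul (by omega)]
    omega
  have hthree {k : ℕ} (h₅ : k ≠ 5) (h₇ : k ≠ 7) : cycleThueNumber (2 * k) = 3 := by
    grind [cycleThueNumber]
  by_cases h₅ : n / 46 = 5
  · exact ⟨4, by omega, by omega, hthree (by omega) (by omega), hdiv (by omega) (by omega)⟩
  by_cases h₇ : n / 46 = 7
  · exact ⟨6, by omega, by omega, hthree (by omega) (by omega), hdiv (by omega) (by omega)⟩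
  · exact ⟨n / 46, by omega, by omega, hthree h₅ h₇, hdiv (by omega) (by omega)⟩

lemma hasAntipodalWord_cycleThueNumber (hn : 4 ≤ n) : HasAntipodalWord (cycleThueNumber n) n := by
  induction n using Nat.strong_induction_on with
  | h n ih =>
    obtain hlt | hle := lt_or_ge n 92
    · exact hasAntipodalWord_of_lt_92 hn hlt
    · obtain ⟨k, hk, hkn, hthree, hdiv⟩ := exists_half_blockCount hle
      rw [show cycleThueNumber n = 3 by grind [cycleThueNumber]]
      exact .of_div_mem (by omega) (hthree ▸ ih (2 * k) hkn (by omega)) hdiv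

end EvenCuts

section ThueNumber

variable {V α β : Type*} {G : SimpleGraph V}

lemma IsThueColoring.of_comp {φ : V → α} {f : α → β} (h : IsThueColoring G (f ∘ φ)) :
    IsThueColoring G φ := by
  refine ⟨fun a b hab heq ↦ h.1 hab (congrArg f heq), fun a b p hp l hl heq ↦ ?_⟩
  refine h.2 p hp (l.map f) (List.map_eq_nil_iff.not.2 hl) ?_
  rw [← List.map_append, ← heq, List.map_map]

lemma IsThueColoring.thueNumber_le {k : ℕ} {φ : V → Fin k} (h : IsThueColoring G φ) :
    thueNumber G ≤ k :=
  Nat.sInf_le ⟨φ, h⟩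

lemma IsThueColoring.surjective {k : ℕ} {φ : V → Fin k} (h : IsThueColoring G φ)
    (hk : k ≤ thueNumber G) : Surjective φ := by
  by_contra hφ
  simp only [Surjective, not_forall, not_exists] at hφ
  obtain ⟨c, hc⟩ := hφ
  obtain ⟨m, rfl⟩ : ∃ m, k = m + 1 := Nat.exists_eq_succ_of_ne_zero c.pos.ne'
  choose ψ hψ using fun v ↦ Fin.exists_succAbove_eq (hc v)
  have hψc : IsThueColoring G (c.succAbove ∘ ψ) := by rwa [show c.succAbove ∘ ψ = φ from funext hψ]
  exact (hk.trans hψc.of_comp.thueNumber_le).not_gt m.lt_succ_self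

end ThueNumber

section CycleGraph

open scoped Fin.CommRing

variable {n : ℕ}

lemma cycleGraph_adj_iff_sub_eq {u v : Fin (n + 2)} :
    (cycleGraph (n + 2)).Adj u v ↔ v - u = 1 ∨ v - u = -1 := by
  rw [cycleGraph_adj, or_comm, ← neg_sub v u, neg_eq_iff_eq_neg]

-- On a path both steps `±1` at an inner vertex agree, as opposite steps would lead back.
lemma getVert_succ_sub_getVert_of_isPath {a b : Fin (n + 2)} {p : (cycleGraph (n + 2)).Walk a b}
    (hp : p.IsPath) {i : ℕ} (hi : i < p.length) :
    p.getVert (i + 1) - p.getVert i = p.getVert 1 - p.getVert 0 := by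
  induction i with
  | zero => rfl
  | succ i ih =>
    rw [← ih (by omega)]
    have hback : p.getVert (i + 2) ≠ p.getVert i := fun heq ↦ by
      have := hp.getVert_injOn (show i + 2 ≤ p.length by omega) (show i ≤ p.length by omega) heq
      omega
    have hstep := cycleGraph_adj_iff_sub_eq.1 (p.adj_getVert_succ (i := i) (by omega))
    have hstep' := cycleGraph_adj_iff_sub_eq.1 (p.adj_getVert_succ hi)
    grind

lemma getVert_eq_add_or_reverse_getVert_eq_add {a b : Fin (n + 2)}
    {p : (cycleGraph (n + 2)).Walk a b} (hp : p.IsPath) :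
    (∀ i ≤ p.length, p.getVert i = a + i) ∨ ∀ i ≤ p.length, p.reverse.getVert i = b + i := by
  have hlinear (i : ℕ) (hi : i ≤ p.length) :
      p.getVert i = a + i * (p.getVert 1 - p.getVert 0) := by
    induction i with
    | zero => simp
    | succ i ih =>
      have hstep := getVert_succ_sub_getVert_of_isPath hp (i := i) (by omega)
      rw [sub_eq_iff_eq_add.1 hstep, ih (by omega)]
      push_cast
      ring
  obtain h₀ | hpos := p.length.eq_zero_or_pos
  · left
    intro i hi
    obtain rfl : i = 0 := by omega
    simp
  obtain hε | hε := cycleGraph_adj_iff_sub_eq.1 (p.adj_getVert_succ hpos) <;>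
    simp only [zero_add] at hε <;> simp only [hε] at hlinear
  · exact .inl fun i hi ↦ by rw [hlinear i hi, mul_one]
  · refine .inr fun i hi ↦ ?_
    have hb := hlinear p.length le_rfl
    rw [Walk.getVert_length] at hb
    rw [Walk.getVert_reverse, hlinear _ (Nat.sub_le _ _), Nat.cast_sub hi]
    linear_combination -hb

lemma support_eq_factor_or_reverse_support_eq_factor {a b : Fin (n + 2)}
    {p : (cycleGraph (n + 2)).Walk a b} (hp : p.IsPath) :
    p.support = factor Nat.cast a (p.length + 1) ∨
      p.support.reverse = factor Nat.cast b (p.length + 1) := by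
  have hsupport {a b : Fin (n + 2)} (p : (cycleGraph (n + 2)).Walk a b)
      (h : ∀ i ≤ p.length, p.getVert i = a + i) : p.support = factor Nat.cast a (p.length + 1) :=
    List.ext_getElem (by simp [length_factor]) fun i hi _ ↦ by
      rw [Walk.length_support] at hi
      rw [Walk.support_getElem_eq_getVert, h i (by omega)]
      simp [factor]
  obtain h | h := getVert_eq_add_or_reverse_getVert_eq_add hp
  · exact .inl (hsupport p h)
  · have := hsupport p.reverse (by rwa [Walk.length_reverse])
    rw [Walk.support_reverse, Walk.length_reverse] at this
    exact .inr this

lemma exists_isPath_support_eq_factor {m : ℕ} (hm : 0 < m) (hmn : m ≤ n + 2) (s : ℕ) :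
    ∃ (a b : Fin (n + 2)) (p : (cycleGraph (n + 2)).Walk a b),
      p.IsPath ∧ p.support = factor Nat.cast s m := by
  have hchain : (factor Nat.cast s m).IsChain (cycleGraph (n + 2)).Adj := by
    rw [List.isChain_iff_getElem]
    intro i _
    rw [cycleGraph_adj_iff_sub_eq]
    left
    simp [factor]
  have hnodup : (factor (Nat.cast : ℕ → Fin (n + 2)) s m).Nodup := by
    refine (List.nodup_map_iff_inj_on List.nodup_range').2 fun i hi j hj hij ↦ ?_
    rw [List.mem_range'_1] at hi hj
    have hmod : i % (n + 2) = j % (n + 2) := congrArg Fin.val hij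
    exact Nat.ModEq.eq_of_abs_lt hmod (abs_lt.2 (by omega))
  have hne : factor (Nat.cast : ℕ → Fin (n + 2)) s m ≠ [] := by
    rw [← List.length_pos_iff, length_factor]
    exact hm
  refine ⟨_, _, Walk.ofSupport _ hne hchain, ?_, Walk.support_ofSupport hne hchain⟩
  rwa [Walk.isPath_def, Walk.support_ofSupport]

lemma isThueColoring_cycleGraph_iff {α : Type*} {φ : Fin (n + 2) → α} :
    IsThueColoring (cycleGraph (n + 2)) φ ↔ IsCircularSquareFree (φ ∘ Nat.cast) (n + 2) := by
  constructor
  · refine fun h ↦ ⟨fun i ↦ by simp, fun m hm hmn s heq ↦ ?_⟩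
    obtain ⟨a, b, p, hp, hsupport⟩ := exists_isPath_support_eq_factor (by omega) hmn s
    refine h.2 p hp (factor (φ ∘ Nat.cast) s m)
      (List.ne_nil_of_length_pos (by rwa [length_factor])) ?_
    rw [hsupport, map_factor, two_mul, factor_add, heq]
  · refine fun h ↦ ⟨fun a b hab heq ↦ ?_, fun a b p hp l hl heq ↦ ?_⟩
    · wlog hba : b - a = 1 generalizing a b
      · exact this b a hab.symm heq.symm ((cycleGraph_adj_iff_sub_eq.1 hab.symm).resolve_right
          fun h' ↦ hba (by rw [← neg_sub, h', neg_neg]))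
      refine h.ne_succ (by omega) a ?_
      rw [comp_apply, comp_apply, Nat.cast_succ, Fin.cast_val_eq_self, ← hba, add_sub_cancel, heq]
    · have hlen : p.length + 1 ≤ n + 2 := hp.length_lt.trans_eq (Fintype.card_fin _)
      obtain hs | hs := support_eq_factor_or_reverse_support_eq_factor hp
      · rw [hs, map_factor] at heq
        exact h.factor_ne_append_self hlen hl heq
      · refine h.factor_ne_append_self hlen (List.reverse_eq_nil_iff.not.2 hl) (s := b) ?_
        rw [← List.reverse_append, ← heq, ← List.map_reverse, hs, map_factor]

lemma IsCircularSquareFree.isThueColoring_cycleGraph {α : Type*} {w : ℕ → α} {n : ℕ}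
    (h : IsCircularSquareFree w n) (hn : 2 ≤ n) :
    IsThueColoring (cycleGraph n) fun v ↦ w v := by
  obtain ⟨n, rfl⟩ := Nat.exists_eq_add_of_le' hn
  refine isThueColoring_cycleGraph_iff.2 ?_
  rwa [show (fun v : Fin (n + 2) ↦ w v) ∘ Nat.cast = w from funext h.periodic.map_mod_nat]

lemma dist_cycleGraph_add_le (u : Fin (n + 2)) (t : ℕ) :
    (cycleGraph (n + 2)).dist u (u + t) ≤ t := by
  induction t with
  | zero => simp
  | succ t ih =>
    have hadj : (cycleGraph (n + 2)).Adj (u + t) (u + (t + 1 : ℕ)) :=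
      cycleGraph_adj_iff_sub_eq.2 (.inl (by push_cast; ring))
    exact cycleGraph_connected.dist_triangle.trans
      (Nat.add_le_add ih (dist_eq_one_iff_adj.2 hadj).le)

lemma dist_cycleGraph (u v : Fin (n + 2)) :
    (cycleGraph (n + 2)).dist u v = min (v - u).val (u - v).val := by
  have hle (u v : Fin (n + 2)) : (cycleGraph (n + 2)).dist u v ≤ (v - u).val := by
    simpa using dist_cycleGraph_add_le u (v - u).val
  refine le_antisymm (le_min (hle u v) (dist_comm.trans_le (hle v u))) ?_
  obtain ⟨p, hp, hdist⟩ := cycleGraph_connected.exists_path_of_dist u v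
  rw [← hdist]
  obtain h | h := getVert_eq_add_or_reverse_getVert_eq_add hp
  · have hv := h p.length le_rfl
    rw [Walk.getVert_length, ← sub_eq_iff_eq_add'] at hv
    refine (min_le_left _ _).trans ?_
    rw [hv]
    exact Nat.mod_le _ _
  · have hu := h p.length le_rfl
    rw [← Walk.length_reverse, Walk.getVert_length, ← sub_eq_iff_eq_add', Walk.length_reverse] at hu
    refine (min_le_right _ _).trans ?_
    rw [hu]
    exact Nat.mod_le _ _

lemma dist_cycleGraph_le_half {n : ℕ} (u v : Fin n) : (cycleGraph n).dist u v ≤ n / 2 := by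
  match n with
  | 0 => exact u.elim0
  | 1 => simp [Subsingleton.elim u v]
  | n + 2 =>
    have hneg : (u - v).val ≤ n + 2 - (v - u).val := by
      rw [← neg_sub, Fin.val_neg']
      exact Nat.mod_le _ _
    rw [dist_cycleGraph]
    omega

lemma dist_cycleGraph_zero_half {n : ℕ} (hn : 2 ≤ n) :
    (cycleGraph n).dist ⟨0, by omega⟩ ⟨n / 2, by omega⟩ = n / 2 := by
  obtain ⟨n, rfl⟩ := Nat.exists_eq_add_of_le' hn
  rw [dist_cycleGraph, Fin.val_sub, Fin.val_sub]
  simp only [Nat.sub_zero, Nat.add_zero, Nat.add_mod_left]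
  rw [Nat.mod_eq_of_lt (by omega), Nat.mod_eq_of_lt (by omega)]
  omega

lemma diam_cycleGraph (n : ℕ) : (cycleGraph n).diam = n / 2 := by
  match n with
  | 0 => exact diam_eq_zero.2 (.inr inferInstance)
  | 1 => exact diam_eq_zero.2 (.inr inferInstance)
  | n + 2 =>
    obtain ⟨u, v, huv⟩ := (cycleGraph (n + 2)).exists_dist_eq_diam
    refine le_antisymm (huv ▸ dist_cycleGraph_le_half u v) ?_
    rw [← dist_cycleGraph_zero_half (by omega)]
    exact dist_le_diam (connected_iff_ediam_ne_top.1 cycleGraph_connected)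

lemma IsThueColoring.cycleThueNumber_le {n k : ℕ} {φ : Fin n → Fin k}
    (h : IsThueColoring (cycleGraph n) φ) (hn : 4 ≤ n) : cycleThueNumber n ≤ k := by
  obtain ⟨n, rfl⟩ := Nat.exists_eq_add_of_le' (show 2 ≤ n by omega)
  exact (isThueColoring_cycleGraph_iff.1 h).cycleThueNumber_le hn

lemma thueNumber_cycleGraph {n : ℕ} (hn : 4 ≤ n) :
    thueNumber (cycleGraph n) = cycleThueNumber n := by
  obtain ⟨w, hw, -⟩ := hasAntipodalWord_cycleThueNumber hn
  exact IsLeast.csInf_eq ⟨⟨_, hw.isThueColoring_cycleGraph (by omega)⟩,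
    fun _ ⟨_, hφ⟩ ↦ hφ.cycleThueNumber_le hn⟩

lemma exists_isThueColoring_dist_eq_half {n : ℕ} (hn : 4 ≤ n) :
    ∃ φ : Fin n → Fin (thueNumber (cycleGraph n)), Surjective φ ∧
      IsThueColoring (cycleGraph n) φ ∧
      ∃ u v : Fin n, u ≠ v ∧ φ u = φ v ∧ (cycleGraph n).dist u v = n / 2 := by
  obtain ⟨w, hw, hopp⟩ : HasAntipodalWord (thueNumber (cycleGraph n)) n :=
    thueNumber_cycleGraph hn ▸ hasAntipodalWord_cycleThueNumber hn
  have hφ := hw.isThueColoring_cycleGraph (by omega)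
  exact ⟨_, hφ.surjective le_rfl, hφ, ⟨0, by omega⟩, ⟨n / 2, by omega⟩,
    Fin.ne_of_val_ne (by dsimp only; omega), hopp, dist_cycleGraph_zero_half (by omega)⟩

end CycleGraph

/-- for the cycle `C_n`, `n ≥ 4`, the Thue reach equals the diameter,
`π_R(C_n) = diam(C_n) = ⌊n/2⌋`: some Thue colouring with exactly `π(C_n)` colours has
two equally coloured vertices at distance `⌊n/2⌋`, and this is the maximum possible
distance between equally coloured vertices over all such colourings. -/
theorem thueReach_cycleGraph (n : ℕ) (hn : 4 ≤ n) :
    thueReach (cycleGraph n) = (cycleGraph n).diam ∧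
    (cycleGraph n).diam = n / 2 ∧
    (∃ φ : Fin n → Fin (thueNumber (cycleGraph n)), Function.Surjective φ ∧
      IsThueColoring (cycleGraph n) φ ∧
      ∃ u v : Fin n, u ≠ v ∧ φ u = φ v ∧ (cycleGraph n).dist u v = n / 2) ∧
    (∀ φ : Fin n → Fin (thueNumber (cycleGraph n)), Function.Surjective φ →
      IsThueColoring (cycleGraph n) φ → ∀ u v : Fin n, u ≠ v → φ u = φ v →
        (cycleGraph n).dist u v ≤ n / 2) := by
  have hdist (u v : Fin n) := dist_cycleGraph_le_half u v
  have hexists := exists_isThueColoring_dist_eq_half hn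
  refine ⟨?_, diam_cycleGraph n, hexists, fun φ _ _ u v _ _ ↦ hdist u v⟩
  obtain ⟨φ, hsurj, hφ, u, v, huv, heq, hhalf⟩ := hexists
  rw [diam_cycleGraph]
  refine IsGreatest.csSup_eq ⟨⟨by omega, φ, hsurj, hφ, u, v, huv, heq, hhalf⟩, ?_⟩
  rintro d ⟨-, φ, -, -, u, v, -, -, rfl⟩
  exact hdist u v
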